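/- For all integers 1 ≤ j ≤ k ≤ n−1 there exists a vector of natural number exponents d = (d_1,…,d_N) (depending only on n, j and k) such that for every t = (t_1,…,t_N) ∈ ℝ^N one has M_{j,k}(A(t)) = ∏_{i=1}^N t_i^{d_i}. In particular, each M_{j,k}(A(t)) is a monomial in t_1,…,t_N with coefficient 1. -/

import Mathlib

noncomputable section

open Matrix

/-- `N = n(n-1)/2`, the number of parameters. -/
def Npar (n : ℕ) : ℕ := n * (n - 1) / 2

/-- The decreasing run `a, a-1, …, b` (empty if `b > a`). -/
def decRun (a b : ℕ) : List ℕ := (List.range' b (a + 1 - b)).reverse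

/-- The index sequence `(i_1, …, i_N)`: for `m = 1, …, ⌊n/2⌋` (here `m` is 0-based, so
`m+1` is the 1-based block index), concatenate `n`, the run `n-2, …, 2(m+1)-1`, and the
run `n-1, …, 2(m+1)`. -/
def wordD (n : ℕ) : List ℕ :=
  ((List.range (n / 2)).map (fun m =>
    n :: (decRun (n - 2) (2 * m + 1) ++ decRun (n - 1) (2 * m + 2)))).flatten

/-- The matrix `x_i(t)` (index `i` is 1-based, matrix positions are 1-based in the paper,
0-based here). -/
def xMat (n : ℕ) (i : ℕ) (t : ℝ) : Matrix (Fin (2 * n)) (Fin (2 * n)) ℝ :=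
  Matrix.of fun p q =>
    (if (p : ℕ) = (q : ℕ) then 1 else 0) +
    (if i < n then
        (if (p : ℕ) + 1 = i ∧ (q : ℕ) + 1 = i + 1 then t else 0)
      + (if (p : ℕ) + 1 = n + i + 1 ∧ (q : ℕ) + 1 = n + i then -t else 0)
     else
        (if (p : ℕ) + 1 = n - 1 ∧ (q : ℕ) + 1 = 2 * n then t else 0)
      + (if (p : ℕ) + 1 = n ∧ (q : ℕ) + 1 = 2 * n - 1 then -t else 0))

/-- The product `x_{i_1}(t_1) ⋯ x_{i_N}(t_N)`; the parameter `t l` plays the role of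
`t_{l+1}`. -/
def prodX (n : ℕ) (t : ℕ → ℝ) : Matrix (Fin (2 * n)) (Fin (2 * n)) ℝ :=
  ((List.range (Npar n)).map (fun l => xMat n ((wordD n).getD l 0) (t l))).prod

/-- The first block `X₁(t)` of the first `n` rows of the product. -/
def X1 (n : ℕ) (t : ℕ → ℝ) : Matrix (Fin n) (Fin n) ℝ :=
  Matrix.of fun p q =>
    prodX n t ⟨(p : ℕ), by have := p.isLt; omega⟩ ⟨(q : ℕ), by have := q.isLt; omega⟩

/-- The second block `X₂(t)` of the first `n` rows of the product. -/
def X2 (n : ℕ) (t : ℕ → ℝ) : Matrix (Fin n) (Fin n) ℝ :=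
  Matrix.of fun p q =>
    prodX n t ⟨(p : ℕ), by have := p.isLt; omega⟩ ⟨n + (q : ℕ), by have := q.isLt; omega⟩

/-- The skew-symmetric matrix `A(t) = X₁(t)⁻¹ · X₂(t)`. -/
def Amat (n : ℕ) (t : ℕ → ℝ) : Matrix (Fin n) (Fin n) ℝ := (X1 n t)⁻¹ * X2 n t

/-- The set `S_n^{>0}` of totally positive skew-symmetric matrices. -/
def Spos (n : ℕ) : Set (Matrix (Fin n) (Fin n) ℝ) :=
  { A | ∃ t : ℕ → ℝ, (∀ i < Npar n, 0 < t i) ∧ A = Amat n t }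

/-- The signed minor `M_{j,k}(A)`: `(-1)^{jk}` times the determinant of the submatrix of `A`
with (1-based) rows `{1,…,n-k-1} ∪ {n-k+j,…,n}` and columns `{1,…,n-j}`. -/
def Mminor (n j k : ℕ) (A : Matrix (Fin n) (Fin n) ℝ) : ℝ :=
  (-1 : ℝ) ^ (j * k) *
    Matrix.det (Matrix.of fun (p q : Fin (n - j)) =>
      A (if (p : ℕ) < n - k - 1
          then ⟨(p : ℕ), by have := p.isLt; omega⟩
          else ⟨(p : ℕ) + j, by have := p.isLt; omega⟩)
        ⟨(q : ℕ), by have := q.isLt; omega⟩)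

/-- The Pfaffian of an `m × m` matrix (intended for `m` even):
`Pf(B) = (1/(2^{m/2} (m/2)!)) Σ_σ sgn(σ) Π_i B_{σ(2i-1), σ(2i)}`. -/
def Pfaff {m : ℕ} (B : Matrix (Fin m) (Fin m) ℝ) : ℝ :=
  (1 / ((2 : ℝ) ^ (m / 2) * (Nat.factorial (m / 2) : ℝ))) *
    ∑ σ : Equiv.Perm (Fin m), ((Equiv.Perm.sign σ : ℤ) : ℝ) *
      ∏ i : Fin (m / 2),
        B (σ ⟨2 * (i : ℕ), by have := i.isLt; omega⟩)
          (σ ⟨2 * (i : ℕ) + 1, by have := i.isLt; omega⟩)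

/-- `Pf_I(A)`: the Pfaffian of the submatrix of `A` with rows and columns indexed by `I`
in increasing order. -/
def PfI {n : ℕ} (A : Matrix (Fin n) (Fin n) ℝ) (I : Finset (Fin n)) : ℝ :=
  Pfaff (Matrix.of fun (p q : Fin I.card) =>
    A ((I.orderIsoOfFin rfl p : Fin n)) ((I.orderIsoOfFin rfl q : Fin n)))

/-- `sgn(I,[n]) = (-1)^{(Σ_{i∈I} i) - |I|(|I|+1)/2}` (the elements of `I` are 1-based, so a
0-based element `i` contributes `i+1`; the natural subtraction agrees with the integer one
since the sum of `|I|` distinct positive integers is at least `|I|(|I|+1)/2`). -/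
def sgnSet {n : ℕ} (I : Finset (Fin n)) : ℝ :=
  (-1 : ℝ) ^ ((∑ i ∈ I, ((i : ℕ) + 1)) - I.card * (I.card + 1) / 2)

/-- The block matrix `[Id_n | A]`. -/
def IdA {n : ℕ} (A : Matrix (Fin n) (Fin n) ℝ) : Matrix (Fin n) (Fin (2 * n)) ℝ :=
  Matrix.of fun p q =>
    if h : (q : ℕ) < n then (if (p : ℕ) = (q : ℕ) then 1 else 0)
    else A p ⟨(q : ℕ) - n, by have := q.isLt; omega⟩

/-- The full word `(j_1, …, j_{2N})`: `1, 2,1, 3,2,1, …, n-1,…,1` followed by `(i_1,…,i_N)`. -/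
def wordFull (n : ℕ) : List ℕ :=
  (((List.range n).map (fun r => decRun r 1)).flatten) ++ wordD n

/-- `z(ε) = x_{j_1}(ε) ⋯ x_{j_{2N}}(ε)`. -/
def zeps (n : ℕ) (ε : ℝ) : Matrix (Fin (2 * n)) (Fin (2 * n)) ℝ :=
  ((wordFull n).map (fun i => xMat n i ε)).prod

/-- `Z(ε) = z(ε)ᵀ · z(ε)`. -/
def Zeps (n : ℕ) (ε : ℝ) : Matrix (Fin (2 * n)) (Fin (2 * n)) ℝ :=
  (zeps n ε)ᵀ * zeps n ε

/-- First block `Y₁(ε)` of `[Id_n | A] · Z(ε)`. -/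
def Y1 {n : ℕ} (A : Matrix (Fin n) (Fin n) ℝ) (ε : ℝ) : Matrix (Fin n) (Fin n) ℝ :=
  Matrix.of fun p q => (IdA A * Zeps n ε) p ⟨(q : ℕ), by have := q.isLt; omega⟩

/-- Second block `Y₂(ε)` of `[Id_n | A] · Z(ε)`. -/
def Y2 {n : ℕ} (A : Matrix (Fin n) (Fin n) ℝ) (ε : ℝ) : Matrix (Fin n) (Fin n) ℝ :=
  Matrix.of fun p q => (IdA A * Zeps n ε) p ⟨n + (q : ℕ), by have := q.isLt; omega⟩

/-- The simple generators `s_i` of the Weyl group `W` of `SO(2n)`, as permutations of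
`{1,…,2n}` (0-based here): for `1 ≤ i ≤ n-1`, `s_i = (i,i+1)(n+i,n+i+1)`; for `i = n`,
`s_n = (n,2n-1)(n-1,2n)`. -/
def sGen (n : ℕ) (i : ℕ) : Equiv.Perm (Fin (2 * n)) :=
  if h : 1 ≤ i ∧ i ≤ n - 1 ∧ 2 ≤ n then
    Equiv.swap ⟨i - 1, by omega⟩ ⟨i, by omega⟩ *
      Equiv.swap ⟨n + i - 1, by omega⟩ ⟨n + i, by omega⟩
  else if h2 : i = n ∧ 2 ≤ n then
    Equiv.swap ⟨n - 1, by omega⟩ ⟨2 * n - 2, by omega⟩ *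
      Equiv.swap ⟨n - 2, by omega⟩ ⟨2 * n - 1, by omega⟩
  else 1

/-- Membership in the Weyl group `W`: `σ(n+i) ≡ n + σ(i) (mod 2n)` for all `1 ≤ i ≤ n`,
and the number of `i ∈ {1,…,n}` with `σ(i) > n` is even. (All positions are 0-based; a
0-based value `v` corresponds to the 1-based value `v+1`.) -/
def inW (n : ℕ) (σ : Equiv.Perm (Fin (2 * n))) : Prop :=
  (∀ i : Fin n,
    ((σ ⟨n + (i : ℕ), by have := i.isLt; omega⟩ : Fin (2 * n)) : ℕ)
      ≡ n + ((σ ⟨(i : ℕ), by have := i.isLt; omega⟩ : Fin (2 * n)) : ℕ) [MOD 2 * n]) ∧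
  Even (Finset.univ.filter (fun i : Fin n =>
    n ≤ ((σ ⟨(i : ℕ), by have := i.isLt; omega⟩ : Fin (2 * n)) : ℕ))).card

/-- `I_w = {i ∈ {1,…,n} : w(i) > n}`, as a finset of `Fin n` (0-based). -/
def Iset (n : ℕ) (σ : Equiv.Perm (Fin (2 * n))) : Finset (Fin n) :=
  Finset.univ.filter (fun i : Fin n =>
    n ≤ ((σ ⟨(i : ℕ), by have := i.isLt; omega⟩ : Fin (2 * n)) : ℕ))

/-- The parabolic subgroup `W_{[n-1]}` generated by `s_1, …, s_{n-1}`. -/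
def Wpar (n : ℕ) : Subgroup (Equiv.Perm (Fin (2 * n))) :=
  Subgroup.closure { σ | ∃ i, 1 ≤ i ∧ i ≤ n - 1 ∧ σ = sGen n i }

/-- The standard basis vector `e_i` of `ℝ^{2n}` (with `i : Fin n` 0-based, sitting in
position `i` of the first block). -/
def evec (n : ℕ) (i : Fin n) : Fin (2 * n) → ℝ :=
  Pi.single ⟨(i : ℕ), by have := i.isLt; omega⟩ 1

/-- The standard basis vector `f_j` of `ℝ^{2n}` (position `n + j`). -/
def fvec (n : ℕ) (j : Fin n) : Fin (2 * n) → ℝ :=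
  Pi.single ⟨n + (j : ℕ), by have := j.isLt; omega⟩ 1

/-- `f = ι(f_1)⋯ι(f_n)` in the Clifford algebra. -/
def fElt {n : ℕ} (Q : QuadraticForm ℝ (Fin (2 * n) → ℝ)) : CliffordAlgebra Q :=
  (List.ofFn (fun j : Fin n => CliffordAlgebra.ι Q (fvec n j))).prod

/-- `e_S = ι(e_{l_1})⋯ι(e_{l_s})` where `l_1 < ⋯ < l_s` enumerates `S`. -/
def eProd {n : ℕ} (Q : QuadraticForm ℝ (Fin (2 * n) → ℝ)) (S : Finset (Fin n)) :
    CliffordAlgebra Q :=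
  ((S.sort (· ≤ ·)).map (fun l => CliffordAlgebra.ι Q (evec n l))).prod

/-- `h = Π_{i=1}^n ι(e_i + Σ_j A_{ij} f_j)` (product in increasing order of `i`). -/
def hElt {n : ℕ} (Q : QuadraticForm ℝ (Fin (2 * n) → ℝ)) (A : Matrix (Fin n) (Fin n) ℝ) :
    CliffordAlgebra Q :=
  (List.ofFn (fun i : Fin n =>
    CliffordAlgebra.ι Q (evec n i + ∑ j : Fin n, A i j • fvec n j))).prod

/-- The sorted list of the (1-based) elements of `S ⊆ {1,…,n}`. -/
def valsOf {n : ℕ} (S : Finset (Fin n)) : List ℕ :=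
  (S.sort (· ≤ ·)).map (fun i => (i : ℕ) + 1)

/-- The word `w_1 w_2 ⋯ w_r` where
`w_m = s_n (s_{n-2}⋯s_{i_{2m-1}}) (s_{n-1}⋯s_{i_{2m}})` and `vals` lists `i_1 < i_2 < ⋯`
(1-based); `m` is 0-based here. -/
def uWord (n r : ℕ) (vals : List ℕ) : List ℕ :=
  ((List.range r).map (fun m =>
    n :: (decRun (n - 2) (vals.getD (2 * m) 0) ++ decRun (n - 1) (vals.getD (2 * m + 1) 0)))).flatten

/-- The permutation `u = w_1 w_2 ⋯ w_r`. -/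
def uPerm (n r : ℕ) (vals : List ℕ) : Equiv.Perm (Fin (2 * n)) :=
  ((uWord n r vals).map (sGen n)).prod

/-- `L = r + Σ_{m=1}^{r} ((n-1-i_{2m-1}) + (n-i_{2m}))`. -/
def Lval (n r : ℕ) (vals : List ℕ) : ℕ :=
  r + ∑ m ∈ Finset.range r, ((n - 1 - vals.getD (2 * m) 0) + (n - vals.getD (2 * m + 1) 0))

open Sum (inl inr)

/-!
Write `n = d + 1` and let `σ` be the permutation matrix exchanging `e_n` and `f_n`. Since
`x_n(t) = σ x_{n-1}(t) σ` and `σ` commutes with `x_1, …, x_{n-2}`, the product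
`x_{i_1}(t_1) ⋯ x_{i_N}(t_N)` is `∏ᵤ σ Sᵤ` with `Sᵤ = x_d ⋯ x_{u+1}`, `u = 0, 1, …`: the even and
the odd decreasing runs of the word play the same role. Each factor `Sᵤ` adds to row `e_{p+1}` a
multiple of row `e_{p+2}`, for all `p ≥ u` at once.

By Cramer's rule the minor `M_{j,k}` of `X₁⁻¹ X₂` is, up to sign, the determinant of the first
`n - j` columns of `X₂` with `j` consecutive columns of `X₁` inserted. The relevant columns of `X₂`
vanish above the antidiagonal and have monomials on it, so Laplace expansion along them leaves a
`j × j` minor of `X₁` lying in the first `j` rows. Peeling off the factors `σ Sᵤ` one at a time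
replaces that minor by the same minor one row lower, times a monomial, until it is unitriangular.
-/

section Monomials

/-- The functions `t ↦ ∏ i ∈ s, t i ^ e i`, that is, the monomials with coefficient `1` in the
variables indexed by `s`, as a submonoid of all functions on the parameter space. -/
def monomialFunctions {ι : Type*} (s : Finset ι) (R : Type*) [CommMonoid R] :
    Submonoid ((ι → R) → R) where
  carrier := {f | ∃ e : ι → ℕ, ∀ t, f t = ∏ i ∈ s, t i ^ e i}
  one_mem' := ⟨0, by simp⟩
  mul_mem' := by
    rintro f g ⟨e, hf⟩ ⟨e', hg⟩
    exact ⟨e + e', fun t => by simp [hf, hg, pow_add, Finset.prod_mul_distrib]⟩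

theorem eval_mem_monomialFunctions {ι R : Type*} [CommMonoid R] {s : Finset ι} {i : ι}
    (hi : i ∈ s) : (fun t : ι → R => t i) ∈ monomialFunctions s R := by
  classical
  refine ⟨Pi.single i 1, fun t => ?_⟩
  rw [Finset.prod_eq_single_of_mem i hi fun l _ hl => by simp [hl]]
  simp

theorem prod_mem_monomialFunctions {ι κ R : Type*} [CommMonoid R] {s : Finset ι} {u : Finset κ}
    {f : κ → (ι → R) → R} (hf : ∀ l ∈ u, f l ∈ monomialFunctions s R) :
    (fun t => ∏ l ∈ u, f l t) ∈ monomialFunctions s R := by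
  simpa only [Finset.prod_fn] using prod_mem hf

end Monomials

section Determinants

variable {R : Type*}

/-- The array with columns `B₀, …, Bₛ₋₁, U₀, …, Uⱼ₋₁, Bₛ, Bₛ₊₁, …`. -/
def insertCols (s j : ℕ) (B U : ℕ → ℕ → R) (i c : ℕ) : R :=
  if c < s then B i c else if c < s + j then U i (c - s) else B i (c - j)

theorem insertCols_zero_delete (j : ℕ) (B U : ℕ → ℕ → R) (i c : ℕ) :
    insertCols 0 j B U i (if c < j then c else c + 1) =
      insertCols 0 j (fun i m => B i (m + 1)) U i c := by
  grind [insertCols]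

theorem insertCols_succ_delete (s j : ℕ) (B U : ℕ → ℕ → R) (i c : ℕ) :
    insertCols (s + 1) j B U i (c + 1) = insertCols s j (fun i m => B i (m + 1)) U i c := by
  grind [insertCols]

variable [CommRing R]

/-- Replacing the columns `φ (inl p)` of `X` by the columns `κ p` of `X * A` multiplies `X` on the
right by a matrix which is block triangular in the decomposition `φ`. -/
theorem det_mul_det_submatrix {α β ι : Type*} [Fintype α] [Finite β] [Fintype ι] [DecidableEq α]
    [DecidableEq ι] (φ : α ⊕ β ≃ ι) (κ : α → ι) (X A C : Matrix ι ι R)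
    (hA : ∀ i p, C i (φ (inl p)) = (X * A) i (κ p))
    (hX : ∀ i q, C i (φ (inr q)) = X i (φ (inr q))) :
    X.det * (A.submatrix (φ ∘ inl) κ).det = C.det := by
  classical
  cases nonempty_fintype β
  set D : Matrix ι (α ⊕ β) R :=
    fromCols (A.submatrix id κ) ((1 : Matrix ι ι R).submatrix id (φ ∘ inr)) with hD
  have hC : C.submatrix φ φ = X.submatrix φ φ * D.submatrix φ id := by
    rw [← submatrix_mul X D φ φ id φ.bijective, hD, mul_fromCols]
    ext i (p | q)
    · simp [hA, mul_apply]
    · simp [hX, mul_apply, one_apply]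
  have hblocks : D.submatrix φ id = fromBlocks (A.submatrix (φ ∘ inl) κ) 0
      (A.submatrix (φ ∘ inr) κ) 1 := by
    ext (i | i) (p | q) <;> simp [hD, one_apply]
  rw [← det_submatrix_equiv_self φ C, hC, det_mul, det_submatrix_equiv_self, hblocks,
    det_fromBlocks_zero₁₂, det_one, mul_one]

/-- The determinant of the leading `N × N` block of an infinite array. -/
def leadingDet (N : ℕ) (F : ℕ → ℕ → R) : R :=
  (Matrix.of fun i c : Fin N => F i c).det

theorem leadingDet_congr {N : ℕ} {F G : ℕ → ℕ → R} (h : ∀ i < N, ∀ c < N, F i c = G i c) :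
    leadingDet N F = leadingDet N G :=
  congrArg det <| Matrix.ext fun i c => h i i.2 c c.2

theorem leadingDet_of_upper_unitriangular {N : ℕ} {F : ℕ → ℕ → R} (hdiag : ∀ i < N, F i i = 1)
    (hlower : ∀ i < N, ∀ c < i, F i c = 0) : leadingDet N F = 1 := by
  have hupper : (of fun i c : Fin N => F i c).IsUpperTriangular :=
    fun i c hci => hlower i i.2 c hci
  rw [leadingDet, det_of_isUpperTriangular hupper]
  exact Finset.prod_eq_one fun i _ => hdiag i i.2

theorem leadingDet_add_smul_succ {N : ℕ} (b : ℕ → R) (F : ℕ → ℕ → R) (h0 : ∀ c < N, F 0 c = 0) :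
    leadingDet N (fun i c => F i c + b i * F (i + 1) c) =
      (∏ i ∈ Finset.range N, b i) * leadingDet N fun i c => F (i + 1) c := by
  set T : Matrix (Fin N) (Fin N) R :=
    diagonal (fun i : Fin N => b i) + of fun i l : Fin N => if (l : ℕ) + 1 = i then 1 else 0 with hT
  have hdet : T.det = ∏ i ∈ Finset.range N, b i := by
    rw [det_of_isLowerTriangular T fun i l (hil : i < l) => by
      simp [hT, diagonal_apply_ne _ hil.ne, show ¬ (l : ℕ) + 1 = i by omega]]
    simp [hT, ← Fin.prod_univ_eq_prod_range]
  have hmul : (of fun i c : Fin N => F i c + b i * F (i + 1) c) =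
      T * of fun i c : Fin N => F (i + 1) c := by
    ext ⟨i, hi⟩ c
    rw [hT, add_mul, Matrix.add_apply, diagonal_mul, add_comm]
    simp only [of_apply, add_left_inj, mul_apply, ite_mul, one_mul, zero_mul]
    cases i with
    | zero => simp [h0]
    | succ i =>
      rw [Finset.sum_eq_single_of_mem (⟨i, by omega⟩ : Fin N) (Finset.mem_univ _)]
      · simp
      · rintro ⟨l, hl⟩ - hne
        rw [if_neg (by simpa using hne)]
  rw [leadingDet, hmul, det_mul, hdet, leadingDet]

theorem leadingDet_succ_of_col_eq_signed {N p : ℕ} (hp : p ≤ N) {F : ℕ → ℕ → R} {x : R}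
    (hzero : ∀ i < N, F i p = 0) (hlast : F N p = (-1) ^ N * x) :
    leadingDet (N + 1) F =
      (-1) ^ p * x * leadingDet N fun i c => F i (if c < p then c else c + 1) := by
  have hsign : (-1) ^ (N + p) * ((-1) ^ N * x) = (-1) ^ p * x := by
    rw [pow_add, mul_mul_mul_comm, ← mul_pow, neg_one_mul, neg_neg, one_pow, one_mul]
  rw [leadingDet, det_succ_column _ (⟨p, by omega⟩ : Fin (N + 1)),
    Finset.sum_eq_single_of_mem (Fin.last N) (Finset.mem_univ _)]
  · simp only [of_apply, Fin.val_last, leadingDet, hlast, hsign]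
    congr 2
    ext i c
    simp only [submatrix_apply, of_apply, Fin.succAbove_last, Fin.val_castSucc, Fin.succAbove,
      Fin.lt_def]
    split_ifs <;> simp
  · intro i _ hi
    simp [hzero i (Fin.val_lt_last hi)]

theorem leadingDet_insertCols_zero (j q : ℕ) (B U : ℕ → ℕ → R) (b : ℕ → R)
    (hzero : ∀ i m, m < q → i + m + 1 < j + q → B i m = 0)
    (hanti : ∀ i m, m < q → i + m + 1 = j + q → B i m = (-1) ^ i * b m) :
    leadingDet (j + q) (insertCols 0 j B U) =
      (-1) ^ (j * q) * (∏ m ∈ Finset.range q, b m) * leadingDet j U := by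
  induction q generalizing B b with
  | zero => simpa using leadingDet_congr fun i _ c hc => by simp [insertCols, hc]
  | succ q ih =>
    have hcol (i : ℕ) : insertCols 0 j B U i j = B i 0 := by simp [insertCols]
    rw [← add_assoc, leadingDet_succ_of_col_eq_signed (Nat.le_add_right j q)
      (fun i hi => (hcol i).trans (hzero i 0 (by omega) (by omega)))
      ((hcol _).trans (hanti (j + q) 0 (by omega) (by omega)))]
    simp only [insertCols_zero_delete]
    rw [ih _ _ (fun i m hm h => hzero i (m + 1) (by omega) (by omega))
      (fun i m hm h => hanti i (m + 1) (by omega) (by omega)), Finset.prod_range_succ']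
    ring

/-- The first column of `B` is nonzero only in the last row, and deleting both reproduces the
situation, so that iterated Laplace expansion leaves the determinant of `U`. -/
theorem leadingDet_insertCols (s j q : ℕ) (B U : ℕ → ℕ → R) (b : ℕ → R)
    (hzero : ∀ i m, m < s + q → i + m + 1 < s + j + q → B i m = 0)
    (hanti : ∀ i m, m < s + q → i + m + 1 = s + j + q → B i m = (-1) ^ i * b m) :
    leadingDet (s + j + q) (insertCols s j B U) =
      (-1) ^ (j * q) * (∏ m ∈ Finset.range (s + q), b m) * leadingDet j U := by
  induction s generalizing B b with
  | zero =>
    simp only [zero_add] at hzero hanti ⊢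
    exact leadingDet_insertCols_zero j q B U b hzero hanti
  | succ s ih =>
    have hcol (i : ℕ) : insertCols (s + 1) j B U i 0 = B i 0 := by simp [insertCols]
    rw [show s + 1 + j + q = s + j + q + 1 by omega,
      leadingDet_succ_of_col_eq_signed (Nat.zero_le _)
        (fun i hi => (hcol i).trans (hzero i 0 (by omega) (by omega)))
        ((hcol _).trans (hanti (s + j + q) 0 (by omega) (by omega)))]
    simp only [Nat.not_lt_zero, if_false, insertCols_succ_delete]
    rw [ih _ _ (fun i m hm h => hzero i (m + 1) (by omega) (by omega))
      (fun i m hm h => hanti i (m + 1) (by omega) (by omega)),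
      show s + 1 + q = s + q + 1 by omega, Finset.prod_range_succ']
    ring

end Determinants

section Sweeps

variable {R : Type*} [CommRing R] {d : ℕ}

/-- The index set of the basis `e_1, …, e_{d+1}, f_1, …, f_{d+1}` of a split quadratic space. -/
abbrev SplitIndex (d : ℕ) : Type := Fin (d + 1) ⊕ Fin (d + 1)

/-- The index of the basis vector `e_{i+1}`; the argument is read modulo `d + 1`, which makes it
possible to write indices as natural numbers. -/
def eIdx (d i : ℕ) : SplitIndex d := inl (Fin.ofNat (d + 1) i)

/-- The index of the basis vector `f_{i+1}`, with the same convention as for `eIdx`. -/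
def fIdx (d i : ℕ) : SplitIndex d := inr (Fin.ofNat (d + 1) i)

theorem eIdx_eq_iff {i p : ℕ} (hi : i ≤ d) (hp : p ≤ d) : eIdx d i = eIdx d p ↔ i = p := by
  simp [eIdx, Fin.ext_iff, Nat.mod_eq_of_lt (Nat.lt_succ_of_le hi),
    Nat.mod_eq_of_lt (Nat.lt_succ_of_le hp)]

theorem fIdx_eq_iff {i p : ℕ} (hi : i ≤ d) (hp : p ≤ d) : fIdx d i = fIdx d p ↔ i = p := by
  simp [fIdx, Fin.ext_iff, Nat.mod_eq_of_lt (Nat.lt_succ_of_le hi),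
    Nat.mod_eq_of_lt (Nat.lt_succ_of_le hp)]

theorem eIdx_ne_fIdx (i p : ℕ) : eIdx d i ≠ fIdx d p := Sum.inl_ne_inr

/-- The one-parameter subgroup `x_{i+1}(t)`, for `i < d`. -/
def xGen (d i : ℕ) (t : R) : Matrix (SplitIndex d) (SplitIndex d) R :=
  transvection (eIdx d i) (eIdx d (i + 1)) t * transvection (fIdx d (i + 1)) (fIdx d i) (-t)

/-- The permutation matrix exchanging `e_{d+1}` and `f_{d+1}`; conjugation by it is the diagram
automorphism of type `D` that exchanges the last two one-parameter subgroups. -/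
def lastSwap (R : Type*) [CommRing R] (d : ℕ) :
    Matrix (SplitIndex d) (SplitIndex d) R :=
  swap R (eIdx d d) (fIdx d d)

/-- The product `xGen d (r + k - 1) _ ⋯ xGen d (r + 1) _ * xGen d r _` along a decreasing run. -/
def sweep (d : ℕ) (a : ℕ → R) (r k : ℕ) :
    Matrix (SplitIndex d) (SplitIndex d) R :=
  ((List.range' r k).reverse.map fun i => xGen d i (a i)).prod

/-- The product of `c` consecutive swapped sweeps, the sweep number `u` running down from `d - 1`
to `u`, starting with sweep number `r`. -/
def sweepProd (d : ℕ) (a : ℕ → ℕ → R) (r c : ℕ) :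
    Matrix (SplitIndex d) (SplitIndex d) R :=
  ((List.range' r c).map fun u => lastSwap R d * sweep d (a u) u (d - u)).prod

theorem sweep_zero (a : ℕ → R) (r : ℕ) : sweep d a r 0 = 1 := rfl

theorem sweep_succ (a : ℕ → R) (r k : ℕ) :
    sweep d a r (k + 1) = sweep d a (r + 1) k * xGen d r (a r) := by
  simp [sweep, List.range'_succ]

theorem sweepProd_zero (a : ℕ → ℕ → R) (r : ℕ) : sweepProd d a r 0 = 1 := rfl

theorem sweepProd_succ (a : ℕ → ℕ → R) (r c : ℕ) :
    sweepProd d a r (c + 1) =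
      lastSwap R d * (sweep d (a r) r (d - r) * sweepProd d a (r + 1) c) := by
  simp [sweepProd, List.range'_succ, mul_assoc]

theorem sweepProd_succ_right (a : ℕ → ℕ → R) (c : ℕ) :
    sweepProd d a 0 (c + 1) = sweepProd d a 0 c * (lastSwap R d * sweep d (a c) c (d - c)) := by
  simp [sweepProd, List.range'_concat]

theorem xGen_mul_eIdx {i p : ℕ} (hi : i < d) (hp : p ≤ d) (t : R)
    (M : Matrix (SplitIndex d) (SplitIndex d) R) (x : SplitIndex d) :
    (xGen d i t * M) (eIdx d p) x =
      M (eIdx d p) x + if p = i then t * M (eIdx d (p + 1)) x else 0 := by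
  rw [xGen, Matrix.mul_assoc]
  split_ifs with hpi
  · subst hpi
    rw [transvection_mul_apply_same, transvection_mul_apply_of_ne _ _ _ _ (eIdx_ne_fIdx _ _),
      transvection_mul_apply_of_ne _ _ _ _ (eIdx_ne_fIdx _ _)]
  · rw [transvection_mul_apply_of_ne _ _ _ _ (mt (eIdx_eq_iff hp hi.le).1 hpi),
      transvection_mul_apply_of_ne _ _ _ _ (eIdx_ne_fIdx _ _), add_zero]

theorem mul_xGen_fIdx_same {i : ℕ} (t : R) (M : Matrix (SplitIndex d) (SplitIndex d) R)
    (x : SplitIndex d) :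
    (M * xGen d i t) x (fIdx d i) = M x (fIdx d i) - t * M x (fIdx d (i + 1)) := by
  rw [xGen, ← Matrix.mul_assoc, mul_transvection_apply_same,
    mul_transvection_apply_of_ne _ _ _ _ (eIdx_ne_fIdx _ _).symm,
    mul_transvection_apply_of_ne _ _ _ _ (eIdx_ne_fIdx _ _).symm]
  ring

theorem mul_xGen_fIdx_of_ne {i m : ℕ} (hi : i ≤ d) (hm : m ≤ d) (h : m ≠ i) (t : R)
    (M : Matrix (SplitIndex d) (SplitIndex d) R) (x : SplitIndex d) :
    (M * xGen d i t) x (fIdx d m) = M x (fIdx d m) := by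
  rw [xGen, ← Matrix.mul_assoc, mul_transvection_apply_of_ne _ _ _ _ (mt (fIdx_eq_iff hm hi).1 h),
    mul_transvection_apply_of_ne _ _ _ _ (eIdx_ne_fIdx _ _).symm]

theorem sweep_mul_eIdx (a : ℕ → R) {r k p : ℕ} (hrk : r + k ≤ d) (hp : p ≤ d)
    (M : Matrix (SplitIndex d) (SplitIndex d) R) (x : SplitIndex d) :
    (sweep d a r k * M) (eIdx d p) x =
      M (eIdx d p) x + if r ≤ p ∧ p < r + k then a p * M (eIdx d (p + 1)) x else 0 := by
  induction k generalizing r M with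
  | zero => simp [sweep_zero, show ¬ (r ≤ p ∧ p < r) by omega]
  | succ k ih =>
    rw [sweep_succ, Matrix.mul_assoc, ih (by omega), xGen_mul_eIdx (by omega) hp]
    by_cases hpr : p = r
    · subst hpr
      simp
    · by_cases hlt : r < p ∧ p < r + 1 + k
      · rw [if_neg hpr, if_pos (by omega), if_pos (by omega), xGen_mul_eIdx (by omega) (by omega),
          if_neg (by omega), add_zero, add_zero]
      · rw [if_neg hpr, if_neg (by omega), if_neg (by omega), add_zero, add_zero]

theorem mul_sweep_fIdx_of_lt (a : ℕ → R) {r k m : ℕ} (hrk : r + k ≤ d) (hm : m < r)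
    (M : Matrix (SplitIndex d) (SplitIndex d) R) (x : SplitIndex d) :
    (M * sweep d a r k) x (fIdx d m) = M x (fIdx d m) := by
  induction k generalizing r with
  | zero => rw [sweep_zero, mul_one]
  | succ k ih =>
    rw [sweep_succ, ← Matrix.mul_assoc, mul_xGen_fIdx_of_ne (by omega) (by omega) (by omega),
      ih (by omega) (by omega)]

theorem sweep_fIdx_last (a : ℕ → R) {r k : ℕ} (hrk : r + k = d) :
    sweep d a r k (fIdx d d) (fIdx d r) = ∏ p ∈ Finset.Ico r d, -a p := by
  induction k generalizing r with
  | zero => simp [show r = d by omega, sweep_zero]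
  | succ k ih =>
    have hcol : sweep d a (r + 1) k (fIdx d d) (fIdx d r) = 0 := by
      rw [← one_mul (sweep d a (r + 1) k), mul_sweep_fIdx_of_lt a (by omega) (by omega),
        one_apply_ne (mt (fIdx_eq_iff le_rfl (by omega)).1 (by omega))]
    rw [sweep_succ, mul_xGen_fIdx_same, hcol, ih (by omega),
      Finset.prod_eq_prod_Ico_succ_bot (show r < d by omega)]
    ring

theorem lastSwap_mul_eIdx_of_lt {p : ℕ} (hp : p < d) (M : Matrix (SplitIndex d) (SplitIndex d) R)
    (x : SplitIndex d) :
    (lastSwap R d * M) (eIdx d p) x = M (eIdx d p) x :=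
  swap_mul_of_ne (mt (eIdx_eq_iff hp.le le_rfl).1 hp.ne) (eIdx_ne_fIdx _ _) M

theorem lastSwap_mul_eIdx_last (M : Matrix (SplitIndex d) (SplitIndex d) R) (x : SplitIndex d) :
    (lastSwap R d * M) (eIdx d d) x = M (fIdx d d) x :=
  swap_mul_apply_left _ _ _ M

theorem mul_lastSwap_fIdx_of_lt {m : ℕ} (hm : m < d) (M : Matrix (SplitIndex d) (SplitIndex d) R)
    (x : SplitIndex d) :
    (M * lastSwap R d) x (fIdx d m) = M x (fIdx d m) :=
  mul_swap_of_ne (eIdx_ne_fIdx _ _).symm (mt (fIdx_eq_iff hm.le le_rfl).1 hm.ne) M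

theorem sweepProd_succ_eIdx (a : ℕ → ℕ → R) (r c : ℕ) {p : ℕ} (hp : p < d)
    (x : SplitIndex d) :
    sweepProd d a r (c + 1) (eIdx d p) x = sweepProd d a (r + 1) c (eIdx d p) x +
      if r ≤ p then a r p * sweepProd d a (r + 1) c (eIdx d (p + 1)) x else 0 := by
  rw [sweepProd_succ, lastSwap_mul_eIdx_of_lt hp]
  by_cases hr : r ≤ p
  · rw [sweep_mul_eIdx _ (by omega) hp.le, if_pos (by omega), if_pos hr]
  · by_cases hrd : r ≤ d
    · rw [sweep_mul_eIdx _ (by omega) hp.le, if_neg (by omega), if_neg hr]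
    · rw [Nat.sub_eq_zero_of_le (by omega), sweep_zero, one_mul, if_neg hr, add_zero]

theorem mul_sweepProd_fIdx_of_lt (a : ℕ → ℕ → R) {r c m : ℕ} (hmr : m < r) (hmd : m < d)
    (M : Matrix (SplitIndex d) (SplitIndex d) R) (x : SplitIndex d) :
    (M * sweepProd d a r c) x (fIdx d m) = M x (fIdx d m) := by
  induction c generalizing r M with
  | zero => rw [sweepProd_zero, mul_one]
  | succ c ih =>
    rw [sweepProd_succ, ← Matrix.mul_assoc, ← Matrix.mul_assoc, ih (by omega)]
    obtain hrd | hrd := le_or_gt r d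
    · rw [mul_sweep_fIdx_of_lt _ (by omega) hmr, mul_lastSwap_fIdx_of_lt hmd]
    · rw [Nat.sub_eq_zero_of_le hrd.le, sweep_zero, mul_one, mul_lastSwap_fIdx_of_lt hmd]

theorem sweepProd_eIdx_of_lt (a : ℕ → ℕ → R) {r c p : ℕ} (hpr : p < r) (hpd : p < d)
    (x : SplitIndex d) :
    sweepProd d a r c (eIdx d p) x =
      (1 : Matrix (SplitIndex d) (SplitIndex d) R) (eIdx d p) x := by
  induction c generalizing r with
  | zero => rw [sweepProd_zero]
  | succ c ih => rw [sweepProd_succ_eIdx a r c hpd, if_neg (by omega), add_zero, ih (by omega)]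

theorem sweepProd_eIdx_fIdx_of_add_lt (a : ℕ → ℕ → R) {r c i m : ℕ} (hm : m < d)
    (him : i + m < d + r) : sweepProd d a r c (eIdx d i) (fIdx d m) = 0 := by
  induction c generalizing r i with
  | zero => rw [sweepProd_zero, one_apply_ne (eIdx_ne_fIdx _ _)]
  | succ c ih =>
    obtain hmr | hrm := lt_or_ge m r
    · rw [← one_mul (sweepProd d a r (c + 1)), mul_sweepProd_fIdx_of_lt a hmr hm,
        one_apply_ne (eIdx_ne_fIdx _ _)]
    · rw [sweepProd_succ_eIdx a r c (by omega), ih (by omega), ih (by omega), mul_zero, ite_self,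
        add_zero]

theorem sweepProd_eIdx_fIdx_of_add_eq (a : ℕ → ℕ → R) {r c i m : ℕ} (hrm : r ≤ m) (hmd : m < d)
    (hmc : m < r + c) (him : i + m = d + r) :
    sweepProd d a r c (eIdx d i) (fIdx d m) =
      (∏ u ∈ Finset.range (m - r), a (r + u) (i + u)) * ∏ p ∈ Finset.Ico m d, -a m p := by
  induction c generalizing r i with
  | zero => omega
  | succ c ih =>
    obtain rfl | hlt := hrm.eq_or_lt
    · obtain rfl : i = d := by omega
      rw [sweepProd_succ, lastSwap_mul_eIdx_last, mul_sweepProd_fIdx_of_lt a (by omega) hmd,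
        sweep_fIdx_last _ (by omega), Nat.sub_self, Finset.range_zero, Finset.prod_empty, one_mul]
    · rw [sweepProd_succ_eIdx a r c (by omega), sweepProd_eIdx_fIdx_of_add_lt a hmd (by omega),
        if_pos (by omega), zero_add, ih (by omega) (by omega) (by omega),
        show m - r = m - (r + 1) + 1 by omega, Finset.prod_range_succ']
      simp only [add_zero, add_assoc, add_comm 1]
      ring

/-- The position of a basis vector in the flag spanned successively by `e_1, …, e_d`; all
remaining basis vectors get the position `d`. -/
def flagLevel (d : ℕ) : SplitIndex d → ℕ := Sum.elim (fun p => p) fun _ => d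

theorem flagLevel_eIdx {p : ℕ} (hp : p ≤ d) : flagLevel d (eIdx d p) = p := by
  simp [flagLevel, eIdx, Nat.mod_eq_of_lt (Nat.lt_succ_of_le hp)]

theorem flagLevel_fIdx (p : ℕ) : flagLevel d (fIdx d p) = d := rfl

theorem blockTriangular_xGen {i : ℕ} (hi : i < d) (t : R) :
    (xGen d i t).BlockTriangular (flagLevel d) :=
  (blockTriangular_transvection (by simp [flagLevel_eIdx hi, flagLevel_eIdx hi.le]) t).mul
    (blockTriangular_transvection (by simp [flagLevel_fIdx]) (-t))

theorem blockTriangular_lastSwap : (lastSwap R d).BlockTriangular (flagLevel d) := by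
  have hinv (x : SplitIndex d) :
      flagLevel d (Equiv.swap (eIdx d d) (fIdx d d) x) = flagLevel d x := by
    rw [Equiv.swap_apply_def]
    split_ifs with he hf
    · rw [he, flagLevel_eIdx le_rfl, flagLevel_fIdx]
    · rw [hf, flagLevel_eIdx le_rfl, flagLevel_fIdx]
    · rfl
  intro x y hyx
  rw [← hinv x] at hyx
  have hne : Equiv.swap (eIdx d d) (fIdx d d) x ≠ y := ne_of_apply_ne (flagLevel d) hyx.ne'
  simp [lastSwap, swap, PEquiv.toMatrix_apply, hne]

theorem blockTriangular_sweepProd (a : ℕ → ℕ → R) (r c : ℕ) :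
    (sweepProd d a r c).BlockTriangular (flagLevel d) := by
  refine List.prod_induction (BlockTriangular · (flagLevel d)) (fun _ _ => BlockTriangular.mul)
    blockTriangular_one fun M hM => ?_
  obtain ⟨u, -, rfl⟩ := List.mem_map.1 hM
  refine blockTriangular_lastSwap.mul (List.prod_induction (BlockTriangular · (flagLevel d))
    (fun _ _ => BlockTriangular.mul) blockTriangular_one fun M hM => ?_)
  obtain ⟨i, hi, rfl⟩ := List.mem_map.1 hM
  rw [List.mem_reverse, List.mem_range'_1] at hi
  exact blockTriangular_xGen (by omega) _

theorem sweepProd_eIdx_eIdx_of_lt (a : ℕ → ℕ → R) (r c : ℕ) {p q : ℕ} (hqp : q < p)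
    (hpd : p ≤ d) : sweepProd d a r c (eIdx d p) (eIdx d q) = 0 :=
  blockTriangular_sweepProd a r c <| by
    rwa [flagLevel_eIdx hpd, flagLevel_eIdx (hqp.le.trans hpd)]

theorem sweepProd_eIdx_eIdx_self (a : ℕ → ℕ → R) (r c : ℕ) {p : ℕ} (hp : p < d) :
    sweepProd d a r c (eIdx d p) (eIdx d p) = 1 := by
  induction c generalizing r with
  | zero => rw [sweepProd_zero, one_apply_eq]
  | succ c ih =>
    rw [sweepProd_succ_eIdx a r c hp, ih, sweepProd_eIdx_eIdx_of_lt a _ c p.lt_succ_self hp,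
      mul_zero, ite_self, add_zero]

theorem leadingDet_sweepProd (a : ℕ → ℕ → R) (r e c j : ℕ) (hec : e ≤ c) (hj : r + e + j ≤ d) :
    leadingDet j (fun i q => sweepProd d a r c (eIdx d (r + i)) (eIdx d (r + e + q))) =
      ∏ u ∈ Finset.range e, ∏ i ∈ Finset.range j, a (r + u) (r + u + i) := by
  induction e generalizing r c with
  | zero =>
    rw [Finset.range_zero, Finset.prod_empty]
    exact leadingDet_of_upper_unitriangular
      (fun i hi => sweepProd_eIdx_eIdx_self a r c (by omega))
      fun i hi q hq => sweepProd_eIdx_eIdx_of_lt a r c (by omega) (by omega)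
  | succ e ih =>
    obtain ⟨c, rfl⟩ := Nat.exists_eq_add_of_le' (show 1 ≤ c by omega)
    have hrow (i : ℕ) (hi : i < j) (q : ℕ) :
        sweepProd d a r (c + 1) (eIdx d (r + i)) (eIdx d (r + (e + 1) + q)) =
          sweepProd d a (r + 1) c (eIdx d (r + i)) (eIdx d (r + (e + 1) + q)) + a r (r + i) *
            sweepProd d a (r + 1) c (eIdx d (r + (i + 1))) (eIdx d (r + (e + 1) + q)) := by
      rw [sweepProd_succ_eIdx a r c (by omega), if_pos (by omega), add_assoc r i 1]
    have hfirst (q : ℕ) (hq : q < j) :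
        sweepProd d a (r + 1) c (eIdx d (r + 0)) (eIdx d (r + (e + 1) + q)) = 0 := by
      rw [sweepProd_eIdx_of_lt a (by omega) (by omega),
        one_apply_ne (mt (eIdx_eq_iff (by omega) (by omega)).1 (by omega))]
    rw [leadingDet_congr fun i hi q _ => hrow i hi q,
      leadingDet_add_smul_succ (fun i => a r (r + i))
        (fun i q => sweepProd d a (r + 1) c (eIdx d (r + i)) (eIdx d (r + (e + 1) + q))) hfirst,
      Finset.prod_range_succ', mul_comm]
    have hih := ih (r + 1) c (by omega) (by omega)
    simp only [add_comm, add_left_comm, add_zero] at hih ⊢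
    rw [hih]

theorem leadingDet_insertCols_sweepProd (a : ℕ → ℕ → R) {c s j q : ℕ} (hc : d ≤ c) (hj : 1 ≤ j)
    (hq : 1 ≤ q) (hd : s + j + q = d + 1) :
    leadingDet (s + j + q) (insertCols s j (fun i m => sweepProd d a 0 c (eIdx d i) (fIdx d m))
        fun i m => sweepProd d a 0 c (eIdx d i) (eIdx d (s + m))) =
      (-1) ^ (j * q) *
        (∏ m ∈ Finset.range (s + q),
          (∏ u ∈ Finset.range m, a u (d - m + u)) * ∏ p ∈ Finset.Ico m d, a m p) *
        ∏ u ∈ Finset.range s, ∏ i ∈ Finset.range j, a u (u + i) := by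
  have hcorner := leadingDet_sweepProd (d := d) a 0 s c j (by omega) (by omega)
  simp only [zero_add] at hcorner
  rw [leadingDet_insertCols s j q _ _
    (fun m => (∏ u ∈ Finset.range m, a u (d - m + u)) * ∏ p ∈ Finset.Ico m d, a m p)
    (fun i m hm h => sweepProd_eIdx_fIdx_of_add_lt a (by omega) (by omega)) ?_, hcorner]
  intro i m hm h
  rw [sweepProd_eIdx_fIdx_of_add_eq a m.zero_le (by omega) (by omega) (by omega),
    Finset.prod_neg, Nat.card_Ico, show i = d - m by omega]
  simp only [zero_add, tsub_zero]
  ring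

end Sweeps

section Words

/-- The product of the `g i (t l)`, where `i` runs through the letters of the word `w` and `l` is
the position of the letter. -/
def wordProd {S M : Type*} [Monoid M] (g : ℕ → S → M) (w : List ℕ) (t : ℕ → S) : M :=
  (w.mapIdx fun l i => g i (t l)).prod

theorem wordProd_nil {S M : Type*} [Monoid M] (g : ℕ → S → M) (t : ℕ → S) :
    wordProd g [] t = 1 := rfl

theorem wordProd_append {S M : Type*} [Monoid M] (g : ℕ → S → M) (w w' : List ℕ) (t : ℕ → S) :
    wordProd g (w ++ w') t = wordProd g w t * wordProd g w' fun l => t (w.length + l) := by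
  simp [wordProd, List.mapIdx_append, add_comm]

theorem wordProd_singleton {S M : Type*} [Monoid M] (g : ℕ → S → M) (i : ℕ) (t : ℕ → S) :
    wordProd g [i] t = g i (t 0) := by
  simp [wordProd]

theorem wordProd_concat {S M : Type*} [Monoid M] (g : ℕ → S → M) (w : List ℕ) (i : ℕ)
    (t : ℕ → S) : wordProd g (w ++ [i]) t = wordProd g w t * g i (t w.length) := by
  rw [wordProd_append, wordProd_singleton, add_zero]

theorem length_decRun (a b : ℕ) : (decRun a b).length = a + 1 - b := by
  simp [decRun]

theorem decRun_of_lt {a b : ℕ} (hab : a < b) : decRun a b = [] := by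
  simp [decRun, Nat.sub_eq_zero_of_le hab]

theorem decRun_of_le {a b : ℕ} (hab : b ≤ a) : decRun a b = decRun a (b + 1) ++ [b] := by
  rw [decRun, show a + 1 - b = a + 1 - (b + 1) + 1 by omega, List.range'_succ, List.reverse_cons,
    decRun]

theorem mem_decRun {a b i : ℕ} : i ∈ decRun a b ↔ b ≤ i ∧ i ≤ a := by
  rw [decRun, List.mem_reverse, List.mem_range'_1]
  omega

theorem bounds_of_mem_wordD {n i : ℕ} (hi : i ∈ wordD n) : 2 ≤ n ∧ 1 ≤ i ∧ i ≤ n := by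
  simp only [wordD, List.mem_flatten, List.mem_map, List.mem_range] at hi
  obtain ⟨_, ⟨m, hm, rfl⟩, hi⟩ := hi
  simp only [List.mem_cons, List.mem_append, mem_decRun] at hi
  omega

/-- The number of letters in the first `u` decreasing runs of the word. -/
def sweepOffset (d u : ℕ) : ℕ := ∑ v ∈ Finset.range u, (d - v)

theorem sweepOffset_succ (d u : ℕ) : sweepOffset d (u + 1) = sweepOffset d u + (d - u) :=
  Finset.sum_range_succ _ _

theorem sweepOffset_mono (d : ℕ) : Monotone (sweepOffset d) :=
  monotone_nat_of_le_succ fun u => by simp [sweepOffset_succ]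

theorem sweepOffset_self_succ (d : ℕ) : sweepOffset d (d + 1) = Npar (d + 1) := by
  rw [Npar, ← Finset.sum_range_id]
  exact Finset.sum_range_reflect (fun v => v) (d + 1)

theorem sweepOffset_two_mul_half (d : ℕ) :
    sweepOffset d (2 * ((d + 1) / 2)) = Npar (d + 1) := by
  rw [← sweepOffset_self_succ]
  obtain h | h : 2 * ((d + 1) / 2) = d + 1 ∨ 2 * ((d + 1) / 2) = d := by omega
  · rw [h]
  · rw [h, sweepOffset_succ, Nat.sub_self, add_zero]

/-- The parameter of `x_{i+1}` in the `u`-th decreasing run of the word. -/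
def sweepParam {S : Type*} (d : ℕ) (t : ℕ → S) (u i : ℕ) : S :=
  t (sweepOffset d u + (d - 1 - i))

theorem sweepParam_mem_monomialFunctions {R : Type*} [CommMonoid R] {d u i : ℕ} (hui : u ≤ i)
    (hid : i < d) : (fun t : ℕ → R => sweepParam d t u i) ∈
      monomialFunctions (Finset.range (Npar (d + 1))) R := by
  refine eval_mem_monomialFunctions (Finset.mem_range.2 ?_)
  calc sweepOffset d u + (d - 1 - i) < sweepOffset d (u + 1) := by
        rw [sweepOffset_succ]
        omega
    _ ≤ sweepOffset d (d + 1) := sweepOffset_mono d (by omega)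
    _ = Npar (d + 1) := sweepOffset_self_succ d

end Words

section SplitForm

variable {d : ℕ}

theorem swap_mul_transvection_mul_swap {ι R : Type*} [Fintype ι] [DecidableEq ι] [CommRing R]
    (x y i j : ι) (c : R) :
    swap R x y * transvection i j c * swap R x y =
      transvection (Equiv.swap x y i) (Equiv.swap x y j) c := by
  simp only [transvection, mul_add, add_mul, mul_one, swap_mul_self]
  rw [swap, PEquiv.toMatrix_toPEquiv_mul, PEquiv.mul_toMatrix_toPEquiv, submatrix_submatrix]
  simp [submatrix_single_equiv]

theorem transvection_mul_transvection_of_ne {ι R : Type*} [Fintype ι] [DecidableEq ι] [CommRing R]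
    {i j k l : ι} (hjk : j ≠ k) (s t : R) :
    transvection i j s * transvection k l t = 1 + single i j s + single k l t := by
  simp [transvection, mul_add, add_mul, single_mul_single_of_ne _ _ _ _ hjk]

theorem conj_mul_conj_of_mul_self_eq_one {M : Type*} [Monoid M] {σ : M} (hσ : σ * σ = 1) (A B : M) :
    σ * A * σ * (σ * B * σ) = σ * (A * B) * σ := by
  simp only [mul_assoc]
  rw [← mul_assoc σ σ, hσ, one_mul]

theorem lastSwap_mul_self {R : Type*} [CommRing R] : lastSwap R d * lastSwap R d = 1 :=
  swap_mul_self _ _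

theorem lastSwap_conj_xGen {R : Type*} [CommRing R] (i : ℕ) (t : R) :
    lastSwap R d * xGen d i t * lastSwap R d =
      transvection (Equiv.swap (eIdx d d) (fIdx d d) (eIdx d i))
          (Equiv.swap (eIdx d d) (fIdx d d) (eIdx d (i + 1))) t *
        transvection (Equiv.swap (eIdx d d) (fIdx d d) (fIdx d (i + 1)))
          (Equiv.swap (eIdx d d) (fIdx d d) (fIdx d i)) (-t) := by
  rw [← swap_mul_transvection_mul_swap, ← swap_mul_transvection_mul_swap, xGen, ← lastSwap,
    conj_mul_conj_of_mul_self_eq_one lastSwap_mul_self]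

theorem lastSwap_conj_xGen_of_succ_lt {R : Type*} [CommRing R] {i : ℕ} (hi : i + 1 < d) (t : R) :
    lastSwap R d * xGen d i t * lastSwap R d = xGen d i t := by
  rw [lastSwap_conj_xGen,
    Equiv.swap_apply_of_ne_of_ne (mt (eIdx_eq_iff (by omega) le_rfl).1 (by omega))
      (eIdx_ne_fIdx _ _),
    Equiv.swap_apply_of_ne_of_ne (mt (eIdx_eq_iff (by omega) le_rfl).1 (by omega))
      (eIdx_ne_fIdx _ _),
    Equiv.swap_apply_of_ne_of_ne (eIdx_ne_fIdx _ _).symm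
      (mt (fIdx_eq_iff (by omega) le_rfl).1 (by omega)),
    Equiv.swap_apply_of_ne_of_ne (eIdx_ne_fIdx _ _).symm
      (mt (fIdx_eq_iff (by omega) le_rfl).1 (by omega)), xGen]

theorem lastSwap_conj_xGen_last {R : Type*} [CommRing R] {i : ℕ} (hi : i + 1 = d) (t : R) :
    lastSwap R d * xGen d i t * lastSwap R d =
      transvection (eIdx d i) (fIdx d d) t * transvection (eIdx d d) (fIdx d i) (-t) := by
  rw [lastSwap_conj_xGen, hi, Equiv.swap_apply_left, Equiv.swap_apply_right,
    Equiv.swap_apply_of_ne_of_ne (mt (eIdx_eq_iff (by omega) le_rfl).1 (by omega))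
      (eIdx_ne_fIdx _ _),
    Equiv.swap_apply_of_ne_of_ne (eIdx_ne_fIdx _ _).symm
      (mt (fIdx_eq_iff (by omega) le_rfl).1 (by omega))]

/-- The identification of the rows and columns of the `2n × 2n` matrices, `n = d + 1`, with
`SplitIndex d`. -/
def splitEquiv (d : ℕ) : SplitIndex d ≃ Fin (2 * (d + 1)) :=
  finSumFinEquiv.trans (finCongr (two_mul (d + 1)).symm)

theorem splitEquiv_inl (p : Fin (d + 1)) : (splitEquiv d (inl p) : ℕ) = p := rfl

theorem splitEquiv_inr (p : Fin (d + 1)) : (splitEquiv d (inr p) : ℕ) = d + 1 + p := rfl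

theorem eIdx_eq_iff_splitEquiv {i : ℕ} (hi : i ≤ d) (x : SplitIndex d) :
    eIdx d i = x ↔ (splitEquiv d x : ℕ) = i := by
  obtain p | p := x
  · simp [eIdx, splitEquiv_inl, Fin.ext_iff, Nat.mod_eq_of_lt (Nat.lt_succ_of_le hi), eq_comm]
  · exact iff_of_false Sum.inl_ne_inr (by rw [splitEquiv_inr]; omega)

theorem fIdx_eq_iff_splitEquiv {i : ℕ} (hi : i ≤ d) (x : SplitIndex d) :
    fIdx d i = x ↔ (splitEquiv d x : ℕ) = d + 1 + i := by
  obtain p | p := x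
  · exact iff_of_false Sum.inr_ne_inl (by rw [splitEquiv_inl]; omega)
  · simp [fIdx, splitEquiv_inr, Fin.ext_iff, Nat.mod_eq_of_lt (Nat.lt_succ_of_le hi), eq_comm]

/-- The matrix `x_i(t)` in the index set `SplitIndex d`. -/
def splitXMat (d i : ℕ) (t : ℝ) : Matrix (SplitIndex d) (SplitIndex d) ℝ :=
  (xMat (d + 1) i t).submatrix (splitEquiv d) (splitEquiv d)

theorem splitXMat_succ {i : ℕ} (hi : i < d) (t : ℝ) : splitXMat d (i + 1) t = xGen d i t := by
  rw [xGen, transvection_mul_transvection_of_ne (eIdx_ne_fIdx _ _)]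
  ext x y
  simp only [splitXMat, xMat, submatrix_apply, of_apply, Matrix.add_apply, one_apply, single_apply,
    eIdx_eq_iff_splitEquiv hi.le, eIdx_eq_iff_splitEquiv hi, fIdx_eq_iff_splitEquiv hi.le,
    fIdx_eq_iff_splitEquiv hi, if_pos (Nat.succ_lt_succ hi), Fin.val_inj,
    (splitEquiv d).apply_eq_iff_eq, add_assoc]
  congr! 4 <;> omega

theorem splitXMat_last {i : ℕ} (hi : i + 1 = d) (t : ℝ) :
    splitXMat d (d + 1) t = lastSwap ℝ d * xGen d i t * lastSwap ℝ d := by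
  rw [lastSwap_conj_xGen_last hi,
    transvection_mul_transvection_of_ne (eIdx_ne_fIdx _ _).symm]
  ext x y
  have hid : i ≤ d := by omega
  simp only [splitXMat, xMat, submatrix_apply, of_apply, Matrix.add_apply, one_apply, single_apply,
    eIdx_eq_iff_splitEquiv hid, eIdx_eq_iff_splitEquiv le_rfl, fIdx_eq_iff_splitEquiv hid,
    fIdx_eq_iff_splitEquiv le_rfl, lt_irrefl, if_false, Fin.val_inj,
    (splitEquiv d).apply_eq_iff_eq, add_assoc]
  congr! 4 <;> omega

end SplitForm

section WordFactorization

variable {d : ℕ}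

theorem wordProd_decRun (t : ℕ → ℝ) {r k : ℕ} (hrk : r + k = d) :
    wordProd (splitXMat d) (decRun d (r + 1)) t = sweep d (fun i => t (d - 1 - i)) r k := by
  induction k generalizing r with
  | zero => rw [decRun_of_lt (by omega), wordProd_nil, sweep_zero]
  | succ k ih =>
    rw [decRun_of_le (by omega), wordProd_concat, ih (by omega), splitXMat_succ (by omega),
      sweep_succ, length_decRun]
    congr 3
    omega

theorem wordProd_cons_decRun (t : ℕ → ℝ) {r k : ℕ} (hrk : r + k + 1 = d) :
    wordProd (splitXMat d) ((d + 1) :: decRun (d - 1) (r + 1)) t =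
      lastSwap ℝ d * sweep d (fun i => t (d - 1 - i)) r (k + 1) * lastSwap ℝ d := by
  induction k generalizing r with
  | zero =>
    rw [decRun_of_lt (by omega), wordProd_singleton, splitXMat_last hrk, sweep_succ, sweep_zero,
      one_mul, show d - 1 - r = 0 by omega]
  | succ k ih =>
    rw [decRun_of_le (by omega), ← List.cons_append, wordProd_concat, ih (by omega),
      splitXMat_succ (by omega), sweep_succ _ r, List.length_cons, length_decRun,
      ← lastSwap_conj_xGen_of_succ_lt (show r + 1 < d by omega),
      conj_mul_conj_of_mul_self_eq_one lastSwap_mul_self]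
    congr 5
    omega

theorem wordProd_block (t : ℕ → ℝ) {m : ℕ} (hm : 2 * m + 1 ≤ d) :
    wordProd (splitXMat d) ((d + 1) :: (decRun (d - 1) (2 * m + 1) ++ decRun d (2 * m + 2)))
        (fun l => t (sweepOffset d (2 * m) + l)) =
      lastSwap ℝ d * sweep d (sweepParam d t (2 * m)) (2 * m) (d - 2 * m) *
        (lastSwap ℝ d * sweep d (sweepParam d t (2 * m + 1)) (2 * m + 1) (d - (2 * m + 1))) := by
  obtain ⟨k, hk⟩ := Nat.exists_eq_add_of_le hm
  rw [← List.cons_append, wordProd_append, wordProd_cons_decRun _ (show 2 * m + k + 1 = d by omega),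
    wordProd_decRun _ (show 2 * m + 1 + k = d by omega), List.length_cons, length_decRun,
    show d - 2 * m = k + 1 by omega, show d - (2 * m + 1) = k by omega, ← mul_assoc]
  congr 2
  funext i
  rw [sweepParam, sweepOffset_succ]
  congr 1
  omega

/-- The concatenation of the first `m` blocks of the word `wordD (d + 1)`. -/
def wordBlocks (d m : ℕ) : List ℕ :=
  ((List.range m).map fun m =>
    (d + 1) :: (decRun (d - 1) (2 * m + 1) ++ decRun d (2 * m + 2))).flatten

theorem wordBlocks_succ (d m : ℕ) : wordBlocks d (m + 1) = wordBlocks d m ++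
    (d + 1) :: (decRun (d - 1) (2 * m + 1) ++ decRun d (2 * m + 2)) := by
  simp [wordBlocks, List.range_succ]

theorem length_wordBlocks {m : ℕ} (hm : 2 * m ≤ d + 1) :
    (wordBlocks d m).length = sweepOffset d (2 * m) := by
  induction m with
  | zero => rfl
  | succ m ih =>
    rw [wordBlocks_succ, List.length_append, ih (by omega), List.length_cons, List.length_append,
      length_decRun, length_decRun, show 2 * (m + 1) = 2 * m + 1 + 1 by omega, sweepOffset_succ,
      sweepOffset_succ]
    omega

theorem wordProd_wordBlocks (t : ℕ → ℝ) {m : ℕ} (hm : 2 * m ≤ d + 1) :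
    wordProd (splitXMat d) (wordBlocks d m) t = sweepProd d (sweepParam d t) 0 (2 * m) := by
  induction m with
  | zero => rfl
  | succ m ih =>
    rw [wordBlocks_succ, wordProd_append, ih (by omega), length_wordBlocks (by omega),
      wordProd_block t (by omega), show 2 * (m + 1) = 2 * m + 1 + 1 by omega, sweepProd_succ_right,
      sweepProd_succ_right, ← mul_assoc]

theorem length_wordD (d : ℕ) : (wordD (d + 1)).length = Npar (d + 1) :=
  (length_wordBlocks (Nat.mul_div_le _ _)).trans (sweepOffset_two_mul_half d)

theorem prodX_submatrix_splitEquiv (t : ℕ → ℝ) :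
    (prodX (d + 1) t).submatrix (splitEquiv d) (splitEquiv d) =
      wordProd (splitXMat d) (wordD (d + 1)) t := by
  have hlist : (List.range (Npar (d + 1))).map
        (fun l => splitXMat d ((wordD (d + 1)).getD l 0) (t l)) =
      (wordD (d + 1)).mapIdx fun l i => splitXMat d i (t l) := by
    refine List.ext_getElem (by simp [length_wordD]) fun l _ hl => ?_
    rw [List.length_mapIdx] at hl
    simp [hl]
  have hmap := map_list_prod (reindexAlgEquiv ℝ ℝ (splitEquiv d).symm)
    ((List.range (Npar (d + 1))).map fun l => xMat (d + 1) ((wordD (d + 1)).getD l 0) (t l))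
  rw [List.map_map] at hmap
  rw [wordProd, ← hlist]
  exact hmap

theorem prodX_submatrix_eq_sweepProd (t : ℕ → ℝ) :
    (prodX (d + 1) t).submatrix (splitEquiv d) (splitEquiv d) =
      sweepProd d (sweepParam d t) 0 (2 * ((d + 1) / 2)) :=
  (prodX_submatrix_splitEquiv t).trans
    (wordProd_wordBlocks t (Nat.mul_div_le _ _))

end WordFactorization

section Minors

/-- The matrices whose lower left block vanishes and whose upper left block has determinant `1`;
the factors of `X(t)` are of this kind, so that `X₁(t)` is invertible. -/
def upperBlockSL (m R : Type*) [Fintype m] [DecidableEq m] [CommRing R] :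
    Submonoid (Matrix (m ⊕ m) (m ⊕ m) R) where
  carrier := {g | g.toBlocks₂₁ = 0 ∧ g.toBlocks₁₁.det = 1}
  one_mem' := by simp [← fromBlocks_one]
  mul_mem' := by
    rintro g h ⟨hg, hg'⟩ ⟨hh, hh'⟩
    rw [← fromBlocks_toBlocks g, ← fromBlocks_toBlocks h, fromBlocks_multiply]
    simp [hg, hg', hh, hh']

theorem transvection_mem_upperBlockSL {m R : Type*} [Fintype m] [DecidableEq m] [CommRing R]
    {x y : m ⊕ m} (hxy : x ≠ y) (hblock : x.isLeft ∨ y.isRight) (c : R) :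
    transvection x y c ∈ upperBlockSL m R := by
  have hlower : (transvection x y c).toBlocks₂₁ = 0 := by
    ext p q
    obtain rfl | hp := eq_or_ne x (inr p) <;> obtain rfl | hq := eq_or_ne y (inl q) <;>
      simp_all [transvection, toBlocks₂₁]
  have hupper : (transvection x y c).toBlocks₁₁.det = 1 := by
    by_cases hleft : ∃ p q, x = inl p ∧ y = inl q
    · obtain ⟨p, q, rfl, rfl⟩ := hleft
      have hpq : (transvection (inl p : m ⊕ m) (inl q) c).toBlocks₁₁ = transvection p q c := by
        ext
        simp [transvection, toBlocks₁₁, one_apply, single_apply]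
      rw [hpq, det_transvection_of_ne _ _ fun h => hxy (congrArg inl h)]
    · have hone : (transvection x y c).toBlocks₁₁ = 1 := by
        ext p q
        have hne : ¬ (x = inl p ∧ y = inl q) := fun h => hleft ⟨p, q, h⟩
        simp [transvection, toBlocks₁₁, one_apply, single_apply, hne]
      rw [hone, det_one]
  exact ⟨hlower, hupper⟩

variable {d : ℕ}

theorem eIdx_coe (p : Fin (d + 1)) : eIdx d p = inl p := by simp [eIdx]

theorem fIdx_coe (p : Fin (d + 1)) : fIdx d p = inr p := by simp [fIdx]

theorem splitXMat_mem_upperBlockSL (hd : 1 ≤ d) {i : ℕ} (hi : 1 ≤ i) (hid : i ≤ d + 1) (t : ℝ) :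
    splitXMat d i t ∈ upperBlockSL (Fin (d + 1)) ℝ := by
  obtain ⟨i, rfl⟩ := Nat.exists_eq_add_of_le' hi
  obtain hlt | rfl : i < d ∨ i = d := by omega
  · rw [splitXMat_succ hlt, xGen]
    exact mul_mem
      (transvection_mem_upperBlockSL (mt (eIdx_eq_iff hlt.le hlt).1 (by omega)) (.inl rfl) _)
      (transvection_mem_upperBlockSL (mt (fIdx_eq_iff hlt hlt.le).1 (by omega)) (.inr rfl) _)
  · rw [splitXMat_last (Nat.sub_add_cancel hd), lastSwap_conj_xGen_last (Nat.sub_add_cancel hd)]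
    exact mul_mem (transvection_mem_upperBlockSL (eIdx_ne_fIdx _ _) (.inl rfl) _)
      (transvection_mem_upperBlockSL (eIdx_ne_fIdx _ _) (.inl rfl) _)

theorem det_X1 (t : ℕ → ℝ) : (X1 (d + 1) t).det = 1 := by
  have hmem : (prodX (d + 1) t).submatrix (splitEquiv d) (splitEquiv d) ∈
      upperBlockSL (Fin (d + 1)) ℝ := by
    rw [prodX_submatrix_splitEquiv, wordProd]
    refine Submonoid.list_prod_mem _ fun g hg => ?_
    obtain ⟨l, hl, rfl⟩ := List.mem_mapIdx.1 hg
    obtain ⟨hn, hpos, hle⟩ := bounds_of_mem_wordD (List.getElem_mem hl)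
    exact splitXMat_mem_upperBlockSL (Nat.le_of_succ_le_succ hn) hpos hle _
  exact hmem.2

theorem X1_mul_Amat (t : ℕ → ℝ) : X1 (d + 1) t * Amat (d + 1) t = X2 (d + 1) t :=
  mul_nonsing_inv_cancel_left _ _ (by simp [det_X1])

theorem X1_apply (t : ℕ → ℝ) (p q : Fin (d + 1)) :
    X1 (d + 1) t p q =
      sweepProd d (sweepParam d t) 0 (2 * ((d + 1) / 2)) (eIdx d p) (eIdx d q) := by
  rw [← prodX_submatrix_eq_sweepProd, eIdx_coe, eIdx_coe]
  rfl

theorem X2_apply (t : ℕ → ℝ) (p q : Fin (d + 1)) :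
    X2 (d + 1) t p q =
      sweepProd d (sweepParam d t) 0 (2 * ((d + 1) / 2)) (eIdx d p) (fIdx d q) := by
  rw [← prodX_submatrix_eq_sweepProd, eIdx_coe, fIdx_coe]
  rfl

/-- The decomposition of `{0, …, d}` into the complement of the interval `{s, …, s + j - 1}`,
in increasing order, and the interval itself. -/
def intervalSplit {d s j : ℕ} (hs : s + j ≤ d + 1) : Fin (d + 1 - j) ⊕ Fin j ≃ Fin (d + 1) :=
  Equiv.ofBijective
    (Sum.elim (fun p => if (p : ℕ) < s then ⟨p, by omega⟩ else ⟨p + j, by omega⟩)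
      fun q => ⟨s + q, by omega⟩) <| by
    refine (Fintype.bijective_iff_injective_and_card _).2 ⟨?_, by simp; omega⟩
    rintro (⟨p, hp⟩ | ⟨p, hp⟩) (⟨q, hq⟩ | ⟨q, hq⟩) h <;> grind

theorem Mminor_Amat_eq_leadingDet {j k : ℕ} (hjk : j ≤ k) (hk : k ≤ d) (t : ℕ → ℝ) :
    Mminor (d + 1) j k (Amat (d + 1) t) = (-1) ^ (j * k) * leadingDet (d + 1)
      (insertCols (d - k) j
        (fun i m => sweepProd d (sweepParam d t) 0 (2 * ((d + 1) / 2)) (eIdx d i) (fIdx d m))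
        fun i m => sweepProd d (sweepParam d t) 0 (2 * ((d + 1) / 2)) (eIdx d i)
          (eIdx d (d - k + m))) := by
  have hs : d - k + j ≤ d + 1 := by omega
  rw [leadingDet, ← det_mul_det_submatrix (intervalSplit hs) (Fin.castLE (Nat.sub_le _ _))
    (X1 (d + 1) t) (Amat (d + 1) t), det_X1, one_mul, Mminor]
  · congr 2
    ext p q
    simp only [of_apply, submatrix_apply]
    congr 1
    grind [intervalSplit]
  · intro i p
    rw [X1_mul_Amat, X2_apply]
    grind [intervalSplit, insertCols, of_apply]
  · intro i q
    rw [X1_apply]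
    grind [intervalSplit, insertCols, of_apply]

theorem Mminor_Amat {j k : ℕ} (hj : 1 ≤ j) (hjk : j ≤ k) (hk : k ≤ d) (t : ℕ → ℝ) :
    Mminor (d + 1) j k (Amat (d + 1) t) =
      (∏ m ∈ Finset.range (d + 1 - j), (∏ u ∈ Finset.range m, sweepParam d t u (d - m + u)) *
        ∏ p ∈ Finset.Ico m d, sweepParam d t m p) *
      ∏ u ∈ Finset.range (d - k), ∏ i ∈ Finset.range j, sweepParam d t u (u + i) := by
  have hd : d - k + j + (k + 1 - j) = d + 1 := by omega
  have hformula := leadingDet_insertCols_sweepProd (sweepParam d t)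
    (show d ≤ 2 * ((d + 1) / 2) by omega) hj (show 1 ≤ k + 1 - j by omega) hd
  rw [hd, show d - k + (k + 1 - j) = d + 1 - j by omega] at hformula
  have hsign : (-1 : ℝ) ^ (j * k) * (-1) ^ (j * (k + 1 - j)) = 1 := by
    rw [← pow_add, ← mul_add]
    refine Even.neg_one_pow ?_
    rw [Nat.even_mul]
    grind
  rw [Mminor_Amat_eq_leadingDet hjk hk, hformula, ← mul_assoc, ← mul_assoc, hsign, one_mul]

end Minors

/-- Each minor `M_{j,k}(A(t))` is a monomial with coefficient `1` in the
parameters `t_1, …, t_N`, with exponents depending only on `n`, `j`, `k`. -/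
theorem Mminor_is_monomial (n : ℕ) (hn : 2 ≤ n)
    (j k : ℕ) (hj : 1 ≤ j) (hjk : j ≤ k) (hk : k ≤ n - 1) :
    ∃ d : ℕ → ℕ, ∀ t : ℕ → ℝ,
      Mminor n j k (Amat n t) = ∏ i ∈ Finset.range (Npar n), t i ^ d i := by
  obtain ⟨d, rfl⟩ := Nat.exists_eq_add_of_le' (show 1 ≤ n by omega)
  suffices hmem : (fun t => Mminor (d + 1) j k (Amat (d + 1) t)) ∈
      monomialFunctions (Finset.range (Npar (d + 1))) ℝ from hmem
  simp only [Mminor_Amat (d := d) hj hjk hk]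
  refine mul_mem (prod_mem_monomialFunctions fun m hm => mul_mem
    (prod_mem_monomialFunctions fun u hu => ?_) (prod_mem_monomialFunctions fun p hp => ?_))
    (prod_mem_monomialFunctions fun u hu => prod_mem_monomialFunctions fun i hi => ?_)
  all_goals
    simp only [Finset.mem_range, Finset.mem_Ico] at *
    exact sweepParam_mem_monomialFunctions (by omega) (by omega)
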